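/- The polynomial q(x) = x¹⁰ − x⁹ − x⁸ − x⁷ + 6x⁶ + x⁵ − 3x⁴ − 4x³ + 2x² + 2x − 1 is irreducible over ℚ. Let L = ℚ[x]/(q(x)), let t be the image of x in L, and let 𝓞_L be the ring of integers of L. Then the principal ideal (t + 1) of 𝓞_L is a prime ideal of absolute norm 7, and the ideal (7) = 7𝓞_L factors as a product 𝒫₁𝒫₂𝒫₃𝒫₄𝒫₅ of five prime ideals of absolute norms 7, 7, 7², 7³ and 7³ respectively, with 𝒫₁ = (t + 1). -/

import Mathlib

open Polynomial

/-- The polynomial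
`q(x) = x¹⁰ − x⁹ − x⁸ − x⁷ + 6x⁶ + x⁵ − 3x⁴ − 4x³ + 2x² + 2x − 1` over `ℚ`. -/
noncomputable def qL : ℚ[X] :=
  X ^ 10 - X ^ 9 - X ^ 8 - X ^ 7 + 6 * X ^ 6 + X ^ 5 - 3 * X ^ 4 - 4 * X ^ 3 +
    2 * X ^ 2 + 2 * X - 1

open NumberField

/-!
The polynomial `q` stays irreducible modulo `2`. Modulo `7` it is a product of five distinct
irreducible polynomials, so it is separable there; as `q'(t)` lies in the conductor of `ℤ[t]`,
the order `ℤ[t]` is maximal at `7`. By Kummer-Dedekind each factor `g` of `q` modulo `7` gives a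
prime ideal `(7, g(t))` of norm `7 ^ deg g`. The product of these five ideals is contained in
`(7)`, and both ideals have norm `7 ^ 10`, so they are equal. Finally `q(-1) = 7`, so `t + 1`
divides `7` and `(7, t + 1) = (t + 1)`.
-/

section FiniteField

variable {k : Type*} [Field k]

-- Every `1 ≤ m ≤ d / 2` has a multiple `n` in `(d / 4, d / 2]`, and an irreducible factor of
-- degree `m` divides `X ^ (#k) ^ n - X`.
theorem irreducible_of_isCoprime_X_pow_card_pow_sub_X [Finite k] {f : k[X]} (hf : 0 < f.natDegree)
    (hcop : ∀ n ∈ Finset.Ioc (f.natDegree / 4) (f.natDegree / 2),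
      IsCoprime f (X ^ Nat.card k ^ n - X)) :
    Irreducible f := by
  rw [irreducible_iff_lt_natDegree_lt (ne_zero_of_natDegree_gt hf)
    (not_isUnit_of_natDegree_pos f hf)]
  intro g hg hgdeg hgf
  rw [Finset.mem_Ioc] at hgdeg
  obtain ⟨r, hr, hrg⟩ :=
    WfDvdMonoid.exists_irreducible_factor (not_isUnit_of_natDegree_pos g hgdeg.1) hg.ne_zero
  set m := r.natDegree
  have hm : 0 < m := hr.natDegree_pos
  have hmle : m ≤ f.natDegree / 2 := (natDegree_le_of_dvd hrg hg.ne_zero).trans hgdeg.2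
  have hmem : m * (f.natDegree / 2 / m) ∈ Finset.Ioc (f.natDegree / 4) (f.natDegree / 2) := by
    have hquot : 0 < f.natDegree / 2 / m := Nat.div_pos hmle hm
    have hlt := Nat.lt_mul_div_succ (f.natDegree / 2) hm
    have hle := Nat.mul_div_le (f.natDegree / 2) m
    rw [Finset.mem_Ioc]
    constructor
    · nlinarith [Nat.div_mul_le_self f.natDegree 4, Nat.lt_div_mul_add (a := f.natDegree) two_pos]
    · exact hle
  have hr_dvd : r ∣ X ^ Nat.card k ^ (m * (f.natDegree / 2 / m)) - X :=
    hr.natDegree_dvd_iff_dvd_X_pow_card_pow_sub_X.mp (dvd_mul_right _ _)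
  exact hr.not_isUnit ((hcop _ hmem).isUnit_of_dvd' (hrg.trans hgf) hr_dvd)

theorem separable_prod_of_monic_irreducible_injective [PerfectField k] {ι : Type*} [Fintype ι]
    {f : ι → k[X]} (hmonic : ∀ i, (f i).Monic) (hirr : ∀ i, Irreducible (f i))
    (hinj : Function.Injective f) : (∏ i, f i).Separable := by
  refine separable_prod (fun i j hij => ?_) fun i => PerfectField.separable_of_irreducible (hirr i)
  refine (hirr i).coprime_iff_not_dvd.mpr fun hdvd => hij (hinj ?_)
  exact eq_of_monic_of_associated (hmonic i) (hmonic j)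
    ((hirr i).associated_of_dvd (hirr j) hdvd)

end FiniteField

theorem ideal_eq_of_le_of_absNorm_eq {S : Type*} [CommRing S] [IsDedekindDomain S]
    [Module.Free ℤ S] {I J : Ideal S} (hle : I ≤ J) (hI : Ideal.absNorm I ≠ 0)
    (h : Ideal.absNorm I = Ideal.absNorm J) : I = J := by
  obtain ⟨H, rfl⟩ := Ideal.dvd_iff_le.mpr hle
  rw [map_mul] at h hI
  have hH : Ideal.absNorm H = 1 := mul_left_cancel₀ (left_ne_zero_of_mul hI) (by rw [h, mul_one])
  rw [Ideal.absNorm_eq_one_iff.mp hH, Ideal.mul_top]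

theorem prod_span_pair_le_span_singleton {R ι : Type*} [CommRing R] {s : Finset ι} {a : R}
    {b : ι → R} (h : a ∣ ∏ i ∈ s, b i) : ∏ i ∈ s, Ideal.span {a, b i} ≤ Ideal.span {a} := by
  rw [← Ideal.mk_ker (I := Ideal.span {a}), ← Ideal.map_eq_bot_iff_le_ker,
    ← Ideal.mapHom_apply, map_prod]
  simp_rw [Ideal.mapHom_apply, Ideal.map_span, Set.image_pair, Ideal.Quotient.mk_singleton_self,
    Ideal.span_insert_zero]
  rwa [Ideal.prod_span_singleton, ← map_prod, Ideal.span_singleton_eq_bot,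
    Ideal.Quotient.eq_zero_iff_dvd]

section KummerDedekind

variable {K : Type*} [Field K] [NumberField K] {θ : 𝓞 K} {p : ℕ} [Fact p.Prime]

theorem aeval_derivative_minpoly_mem_conductor
    (hθ : Algebra.adjoin ℚ {algebraMap (𝓞 K) K θ} = ⊤) :
    aeval θ (derivative (minpoly ℤ θ)) ∈ conductor ℤ θ := by
  have hle : conductor ℤ θ * differentIdeal ℤ (𝓞 K) ≤ conductor ℤ θ := Ideal.mul_le_left
  rw [conductor_mul_differentIdeal ℤ ℚ K θ hθ] at hle
  exact hle (Ideal.mem_span_singleton_self _)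

theorem not_dvd_exponent_of_separable_map_minpoly
    (hθ : Algebra.adjoin ℚ {algebraMap (𝓞 K) K θ} = ⊤)
    (hsep : ((minpoly ℤ θ).map (Int.castRingHom (ZMod p))).Separable) :
    ¬ p ∣ RingOfIntegers.exponent θ := by
  -- A prime above `p` containing the conductor would make `θ` a double root of its minimal
  -- polynomial in the residue field.
  rw [RingOfIntegers.not_dvd_exponent_iff, codisjoint_comm,
    ← Ideal.IsMaximal.out (self := Int.ideal_span_isMaximal_of_prime p) |>.not_le_iff_codisjoint]
  intro hle
  obtain ⟨Q, hQ, hprime, hcomap⟩ := Ideal.exists_ideal_over_prime_of_isIntegral _ _ hle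
  have : CharP (𝓞 K ⧸ Q) p := by
    rw [CharP.charP_iff_prime_eq_zero Fact.out, ← map_natCast (Ideal.Quotient.mk Q),
      Ideal.Quotient.eq_zero_iff_mem, ← map_natCast (algebraMap ℤ (𝓞 K)), ← Ideal.mem_comap, hcomap]
    exact Ideal.mem_span_singleton_self _
  let φ : ZMod p →+* 𝓞 K ⧸ Q := ZMod.castHom dvd_rfl _
  have hφ : φ.comp (Int.castRingHom (ZMod p)) = (Ideal.Quotient.mk Q).comp (algebraMap ℤ (𝓞 K)) :=
    RingHom.ext_int _ _
  have heval (g : ℤ[X]) : (g.map (Int.castRingHom (ZMod p))).eval₂ φ (Ideal.Quotient.mk Q θ) =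
      Ideal.Quotient.mk Q (aeval θ g) := by
    rw [eval₂_map, hφ, aeval_def, hom_eval₂]
  refine hsep.eval₂_derivative_ne_zero φ (x := Ideal.Quotient.mk Q θ) ?_ ?_
  · rw [heval, minpoly.aeval, map_zero]
  · rw [derivative_map, heval, Ideal.Quotient.eq_zero_iff_mem]
    exact hQ (aeval_derivative_minpoly_mem_conductor hθ)

theorem isPrime_span_natCast_aeval (hp : ¬ p ∣ RingOfIntegers.exponent θ) {g : ℤ[X]}
    (hg : g.map (Int.castRingHom (ZMod p)) ∈ RingOfIntegers.monicFactorsMod θ p) :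
    (Ideal.span {(p : 𝓞 K), aeval θ g}).IsPrime := by
  rw [← Ideal.primesOverSpanEquivMonicFactorsMod_symm_apply_eq_span hp hg]
  exact ((Ideal.primesOverSpanEquivMonicFactorsMod hp).symm ⟨_, hg⟩).2.1

theorem absNorm_span_natCast_aeval (hp : ¬ p ∣ RingOfIntegers.exponent θ) {g : ℤ[X]}
    (hg : g.map (Int.castRingHom (ZMod p)) ∈ RingOfIntegers.monicFactorsMod θ p) :
    Ideal.absNorm (Ideal.span {(p : 𝓞 K), aeval θ g}) =
      p ^ (g.map (Int.castRingHom (ZMod p))).natDegree := by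
  have := isPrime_span_natCast_aeval hp hg
  have := Ideal.liesOver_primesOverSpanEquivMonicFactorsMod_symm hp hg
  rw [← Ideal.absNorm_pow_inertiaDeg (Ideal.span {(p : ℤ)}),
    ← Ideal.inertiaDeg_primesOverSpanEquivMonicFactorsMod_symm_apply hp hg,
    Ideal.primesOverSpanEquivMonicFactorsMod_symm_apply_eq_span hp hg]
  simp

theorem absNorm_span_natCast (hp : ¬ p ∣ RingOfIntegers.exponent θ) :
    Ideal.absNorm (Ideal.span {(p : 𝓞 K)}) = p ^ (minpoly ℤ θ).natDegree := by
  have hmonic := (minpoly.monic θ.isIntegral).map (Int.castRingHom (ZMod p))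
  have := hmonic.finite_quotient
  rw [Ideal.absNorm_apply, Submodule.cardQuot_apply,
    ← Nat.card_congr (RingOfIntegers.ZModXQuotSpanEquivQuotSpan hp).toEquiv,
    Module.natCard_eq_pow_finrank (K := ZMod p), finrank_quotient_span_eq_natDegree, Nat.card_zmod,
    (minpoly.monic θ.isIntegral).natDegree_map]

theorem span_natCast_eq_prod_span_natCast_aeval (hp : ¬ p ∣ RingOfIntegers.exponent θ)
    {ι : Type*} [Fintype ι] {g : ι → ℤ[X]}
    (hg : ∀ i, (g i).map (Int.castRingHom (ZMod p)) ∈ RingOfIntegers.monicFactorsMod θ p)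
    (hprod : (minpoly ℤ θ).map (Int.castRingHom (ZMod p)) =
      ∏ i, (g i).map (Int.castRingHom (ZMod p))) :
    Ideal.span {(p : 𝓞 K)} = ∏ i, Ideal.span {(p : 𝓞 K), aeval θ (g i)} := by
  have hp_dvd : (p : 𝓞 K) ∣ ∏ i, aeval θ (g i) := by
    rw [← Ideal.Quotient.eq_zero_iff_dvd, ← map_prod (aeval (R := ℤ) θ),
      ← RingOfIntegers.ZModXQuotSpanEquivQuotSpan_mk_apply hp, Polynomial.map_prod, ← hprod,
      Ideal.Quotient.mk_singleton_self, map_zero]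
  have hmonic (i : ι) : ((g i).map (Int.castRingHom (ZMod p))).Monic :=
    ((Polynomial.mem_normalizedFactors_iff (map_monic_ne_zero (minpoly.monic θ.isIntegral))).mp
      (Multiset.mem_toFinset.mp (hg i))).2.1
  refine (ideal_eq_of_le_of_absNorm_eq (prod_span_pair_le_span_singleton hp_dvd) ?_ ?_).symm
  all_goals simp_rw [map_prod, absNorm_span_natCast_aeval hp (hg _), Finset.prod_pow_eq_pow_sum]
  · exact pow_ne_zero _ (NeZero.ne p)
  · rw [absNorm_span_natCast hp, ← natDegree_prod_of_monic _ _ fun i _ => hmonic i,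
      ← hprod, (minpoly.monic θ.isIntegral).natDegree_map]

end KummerDedekind

/-- The polynomial `q` with integer coefficients, in a form that can be reduced modulo primes. -/
noncomputable def qZ : ℤ[X] :=
  X ^ 10 - X ^ 9 - X ^ 8 - X ^ 7 + 6 * X ^ 6 + X ^ 5 - 3 * X ^ 4 - 4 * X ^ 3 +
    2 * X ^ 2 + 2 * X - 1

theorem monic_qZ : qZ.Monic := by
  unfold qZ; monicity!

theorem natDegree_qZ : qZ.natDegree = 10 := by
  unfold qZ; compute_degree!

theorem map_qZ : qZ.map (algebraMap ℤ ℚ) = qL := by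
  simp [qZ, qL]

theorem map_qZ_zmod_two : qZ.map (Int.castRingHom (ZMod 2)) =
    X ^ 10 + X ^ 9 + X ^ 8 + X ^ 7 + X ^ 5 + X ^ 4 + 1 := by
  simp only [qZ, Polynomial.map_add, Polynomial.map_sub, Polynomial.map_mul,
    Polynomial.map_pow, map_X, Polynomial.map_one, Polynomial.map_ofNat]
  grind

theorem isCoprime_map_qZ_zmod_two_X_pow_eight_sub_X :
    IsCoprime (qZ.map (Int.castRingHom (ZMod 2))) (X ^ 8 - X) := by
  rw [map_qZ_zmod_two]
  refine ⟨X ^ 7 + X ^ 6 + X ^ 4 + X ^ 2 + 1, X ^ 9 + X ^ 6 + X ^ 4 + X, ?_⟩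
  grind

theorem isCoprime_map_qZ_zmod_two_X_pow_sixteen_sub_X :
    IsCoprime (qZ.map (Int.castRingHom (ZMod 2))) (X ^ 16 - X) := by
  rw [map_qZ_zmod_two]
  refine ⟨X ^ 13 + X ^ 8 + X ^ 6 + X ^ 4 + 1, X ^ 7 + X ^ 6 + X ^ 5 + X ^ 4, ?_⟩
  grind

theorem isCoprime_map_qZ_zmod_two_X_pow_thirty_two_sub_X :
    IsCoprime (qZ.map (Int.castRingHom (ZMod 2))) (X ^ 32 - X) := by
  rw [map_qZ_zmod_two]
  refine ⟨X ^ 31 + X ^ 30 + X ^ 28 + X ^ 26 + X ^ 25 + X ^ 23 + X ^ 21 + X ^ 20 + X ^ 19 + X ^ 18 +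
    X ^ 13 + X ^ 9 + X ^ 8 + X ^ 7 + X ^ 6 + X ^ 5 + X ^ 3 + X + 1,
    X ^ 9 + X ^ 6 + X ^ 4 + X ^ 3 + X ^ 2 + 1, ?_⟩
  grind

theorem irreducible_map_qZ_zmod_two : Irreducible (qZ.map (Int.castRingHom (ZMod 2))) := by
  have hdeg : (qZ.map (Int.castRingHom (ZMod 2))).natDegree = 10 := by
    rw [monic_qZ.natDegree_map, natDegree_qZ]
  refine irreducible_of_isCoprime_X_pow_card_pow_sub_X (by rw [hdeg]; norm_num) fun n hn => ?_
  rw [hdeg, Finset.mem_Ioc] at hn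
  rw [Nat.card_zmod]
  obtain rfl | rfl | rfl : n = 3 ∨ n = 4 ∨ n = 5 := by lia
  · exact isCoprime_map_qZ_zmod_two_X_pow_eight_sub_X
  · exact isCoprime_map_qZ_zmod_two_X_pow_sixteen_sub_X
  · exact isCoprime_map_qZ_zmod_two_X_pow_thirty_two_sub_X

theorem irreducible_qZ : Irreducible qZ :=
  monic_qZ.irreducible_of_irreducible_map _ _ irreducible_map_qZ_zmod_two

theorem irreducible_qL : Irreducible qL :=
  map_qZ ▸ monic_qZ.irreducible_iff_irreducible_map_fraction_map.mp irreducible_qZ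

/-- Integral lifts of the irreducible factors of `q` modulo `7`. -/
noncomputable def factorSeven : Fin 5 → ℤ[X] :=
  ![X + 1, X + 3, X ^ 2 + 1, X ^ 3 + 2 * X ^ 2 + X + 6, X ^ 3 + 5]

theorem monic_factorSeven (i : Fin 5) : (factorSeven i).Monic := by
  fin_cases i <;> simp only [factorSeven, Fin.reduceFinMk, Fin.zero_eta, Fin.mk_one,
    Matrix.cons_val] <;> monicity!

theorem natDegree_factorSeven (i : Fin 5) : (factorSeven i).natDegree = ![1, 1, 2, 3, 3] i := by
  fin_cases i <;> simp only [factorSeven, Fin.reduceFinMk, Fin.zero_eta, Fin.mk_one,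
    Matrix.cons_val] <;> compute_degree!

instance fact_prime_seven : Fact (Nat.Prime 7) := ⟨by norm_num⟩

theorem map_qZ_zmod_seven : qZ.map (Int.castRingHom (ZMod 7)) =
    ∏ i, (factorSeven i).map (Int.castRingHom (ZMod 7)) := by
  simp only [qZ, factorSeven, Fin.prod_univ_five, Matrix.cons_val, Polynomial.map_add,
    Polynomial.map_sub, Polynomial.map_mul, Polynomial.map_pow, map_X, Polynomial.map_one,
    Polynomial.map_ofNat]
  grind

theorem eval_map_factorSeven (i : Fin 5) (x : ZMod 7) :
    ((factorSeven i).map (Int.castRingHom (ZMod 7))).eval x =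
      ![x + 1, x + 3, x ^ 2 + 1, x ^ 3 + 2 * x ^ 2 + x + 6, x ^ 3 + 5] i := by
  fin_cases i <;> simp [factorSeven]

theorem irreducible_map_factorSeven (i : Fin 5) :
    Irreducible ((factorSeven i).map (Int.castRingHom (ZMod 7))) := by
  have hmem : ![1, 1, 2, 3, 3] i ∈ Finset.Icc 1 3 := by decide +revert
  have hroot (hi : ![1, 1, 2, 3, 3] i ≠ 1) (x : ZMod 7) :
      ¬ ((factorSeven i).map (Int.castRingHom (ZMod 7))).IsRoot x := by
    rw [IsRoot.def, eval_map_factorSeven]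
    decide +revert
  have hdeg : ((factorSeven i).map (Int.castRingHom (ZMod 7))).natDegree = ![1, 1, 2, 3, 3] i := by
    rw [(monic_factorSeven i).natDegree_map, natDegree_factorSeven]
  by_cases hi : ![1, 1, 2, 3, 3] i = 1
  · exact irreducible_of_degree_eq_one
      ((degree_eq_iff_natDegree_eq_of_pos one_pos).mpr (hdeg.trans hi))
  · exact irreducible_of_degree_le_three_of_not_isRoot (hdeg ▸ hmem) (hroot hi)

theorem injective_map_factorSeven :
    Function.Injective fun i => (factorSeven i).map (Int.castRingHom (ZMod 7)) := by
  intro i j h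
  have h_one := congrArg (eval 1) h
  have h_three := congrArg (eval 3) h
  simp only [eval_map_factorSeven] at h_one h_three
  clear h
  decide +revert

section Field

variable {L : Type*} [Field L] [NumberField L] {t : 𝓞 L}

theorem minpoly_eq_qZ (ht : aeval (algebraMap (𝓞 L) L t) qL = 0) : minpoly ℤ t = qZ := by
  apply map_injective _ (algebraMap ℤ ℚ).injective_int
  rw [← minpoly.isIntegrallyClosed_eq_field_fractions ℚ L t.isIntegral, map_qZ]
  exact (minpoly.eq_of_irreducible_of_monic irreducible_qL ht (map_qZ ▸ monic_qZ.map _)).symm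

theorem not_seven_dvd_exponent (ht : aeval (algebraMap (𝓞 L) L t) qL = 0)
    (htop : Algebra.adjoin ℚ {algebraMap (𝓞 L) L t} = ⊤) :
    ¬ 7 ∣ RingOfIntegers.exponent t := by
  apply not_dvd_exponent_of_separable_map_minpoly htop
  rw [minpoly_eq_qZ ht, map_qZ_zmod_seven]
  exact separable_prod_of_monic_irreducible_injective (fun i => (monic_factorSeven i).map _)
    irreducible_map_factorSeven injective_map_factorSeven

theorem map_factorSeven_mem_monicFactorsMod (ht : aeval (algebraMap (𝓞 L) L t) qL = 0) (i : Fin 5) :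
    (factorSeven i).map (Int.castRingHom (ZMod 7)) ∈ RingOfIntegers.monicFactorsMod t 7 := by
  rw [Multiset.mem_toFinset, minpoly_eq_qZ ht,
    Polynomial.mem_normalizedFactors_iff (monic_qZ.map _).ne_zero, map_qZ_zmod_seven]
  exact ⟨irreducible_map_factorSeven i, (monic_factorSeven i).map _,
    Finset.dvd_prod_of_mem _ (Finset.mem_univ i)⟩

theorem add_one_dvd_seven (ht : aeval (algebraMap (𝓞 L) L t) qL = 0) : t + 1 ∣ 7 := by
  have hroot : aeval t qZ = 0 := minpoly_eq_qZ ht ▸ minpoly.aeval ℤ t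
  have hvalue : aeval (-1 : 𝓞 L) qZ = 7 := by
    simp only [qZ, map_add, map_sub, map_mul, map_pow, map_one, map_ofNat, aeval_X]
    ring
  have hdvd := sub_dvd_eval_sub t (-1) (qZ.map (algebraMap ℤ (𝓞 L)))
  rwa [eval_map_algebraMap, eval_map_algebraMap, hroot, hvalue, sub_neg_eq_add, zero_sub,
    dvd_neg] at hdvd

theorem span_seven_aeval_factorSeven_zero (ht : aeval (algebraMap (𝓞 L) L t) qL = 0) :
    Ideal.span {7, aeval t (factorSeven 0)} = Ideal.span {t + 1} := by
  have hfactor : aeval t (factorSeven 0) = t + 1 := by simp [factorSeven]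
  rw [hfactor, Ideal.span_pair_comm, Ideal.span_pair_eq_span_left_iff_dvd]
  exact add_one_dvd_seven ht

theorem isPrime_span_seven_aeval_factorSeven (ht : aeval (algebraMap (𝓞 L) L t) qL = 0)
    (htop : Algebra.adjoin ℚ {algebraMap (𝓞 L) L t} = ⊤) (i : Fin 5) :
    (Ideal.span {7, aeval t (factorSeven i)}).IsPrime :=
  isPrime_span_natCast_aeval (p := 7) (not_seven_dvd_exponent ht htop)
    (map_factorSeven_mem_monicFactorsMod ht i)

theorem absNorm_span_seven_aeval_factorSeven (ht : aeval (algebraMap (𝓞 L) L t) qL = 0)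
    (htop : Algebra.adjoin ℚ {algebraMap (𝓞 L) L t} = ⊤) (i : Fin 5) :
    Ideal.absNorm (Ideal.span {7, aeval t (factorSeven i)}) = 7 ^ ![1, 1, 2, 3, 3] i := by
  rw [← natDegree_factorSeven, ← (monic_factorSeven i).natDegree_map (Int.castRingHom (ZMod 7))]
  exact absNorm_span_natCast_aeval (not_seven_dvd_exponent ht htop)
    (map_factorSeven_mem_monicFactorsMod ht i)

theorem span_seven_eq_prod (ht : aeval (algebraMap (𝓞 L) L t) qL = 0)
    (htop : Algebra.adjoin ℚ {algebraMap (𝓞 L) L t} = ⊤) :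
    Ideal.span {7} = ∏ i, Ideal.span {7, aeval t (factorSeven i)} :=
  span_natCast_eq_prod_span_natCast_aeval (p := 7) (not_seven_dvd_exponent ht htop)
    (map_factorSeven_mem_monicFactorsMod ht) (by rw [minpoly_eq_qZ ht, map_qZ_zmod_seven])

end Field

/-- `q(x)` is irreducible over `ℚ`; and if `L = ℚ[x]/(q(x))` (i.e. any
number field generated over `ℚ` by a root `t` of `q`, with `t` in the ring of
integers `𝓞_L`), then `(t + 1)` is a prime ideal of `𝓞_L` of absolute norm `7`, and
`(7) = 𝒫₁𝒫₂𝒫₃𝒫₄𝒫₅` with the `𝒫ᵢ` prime of absolute norms `7, 7, 7², 7³, 7³`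
respectively, and `𝒫₁ = (t + 1)`. -/
theorem stmt_14 :
    Irreducible qL ∧
    ∀ (L : Type) [Field L] [NumberField L] (t : NumberField.RingOfIntegers L),
      aeval (algebraMap (NumberField.RingOfIntegers L) L t) qL = 0 →
      Algebra.adjoin ℚ {algebraMap (NumberField.RingOfIntegers L) L t} = ⊤ →
      ((Ideal.span {t + 1}).IsPrime ∧
        Ideal.absNorm (Ideal.span {t + 1}) = 7 ∧
        ∃ P₂ P₃ P₄ P₅ : Ideal (NumberField.RingOfIntegers L),
          P₂.IsPrime ∧ P₃.IsPrime ∧ P₄.IsPrime ∧ P₅.IsPrime ∧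
          Ideal.absNorm P₂ = 7 ∧ Ideal.absNorm P₃ = 7 ^ 2 ∧
          Ideal.absNorm P₄ = 7 ^ 3 ∧ Ideal.absNorm P₅ = 7 ^ 3 ∧
          Ideal.span {(7 : NumberField.RingOfIntegers L)} =
            Ideal.span {t + 1} * P₂ * P₃ * P₄ * P₅) := by
  refine ⟨irreducible_qL, fun L _ _ t ht htop => ?_⟩
  have hprime := isPrime_span_seven_aeval_factorSeven ht htop
  have hnorm := absNorm_span_seven_aeval_factorSeven ht htop
  have hprod := span_seven_eq_prod ht htop
  rw [Fin.prod_univ_five] at hprod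
  rw [← span_seven_aeval_factorSeven_zero ht]
  exact ⟨hprime 0, hnorm 0, _, _, _, _, hprime 1, hprime 2, hprime 3, hprime 4,
    hnorm 1, hnorm 2, hnorm 3, hnorm 4, hprod⟩
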